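/- arXiv:2407.05095 — 2 statements merged into one kernel-verified Lean document; each statement's English description precedes it below -/
import Mathlib

section
/- Let ϖ ⊂ Ω_{C°} be a nonempty compact set and let K_j ∈ K(C,ϖ) for j ∈ ℕ₀. If K_j → K₀ as j → ∞ (in the sense of convergence of C-pseudo-cones), then the Θ-weighted cone-volume measures converge weakly: V_{K_j}^Θ → V_{K₀}^Θ. -/
open MeasureTheory Set Filter
open scoped RealInnerProductSpace ENNReal Topology Pointwise NNReal

noncomputable section

abbrev En (n : ℕ) := EuclideanSpace ℝ (Fin n)

/-- `C` is a pointed closed convex cone with nonempty interior. -/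
def IsGoodCone (n : ℕ) (C : Set (En n)) : Prop :=
  IsClosed C ∧ Convex ℝ C ∧ (∀ x ∈ C, ∀ r : ℝ, 0 ≤ r → r • x ∈ C) ∧
    C ∩ (-C) = {0} ∧ (interior C).Nonempty

/-- The dual cone `C° = {x : ⟨x,y⟩ ≤ 0 ∀ y ∈ C}`. -/
def dualCone (n : ℕ) (C : Set (En n)) : Set (En n) := {x | ∀ y ∈ C, ⟪x, y⟫ ≤ 0}

/-- `Ω_C = S^{n-1} ∩ int C`. -/
def omegaC (n : ℕ) (C : Set (En n)) : Set (En n) := Metric.sphere 0 1 ∩ interior C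

/-- `Ω_{C°} = S^{n-1} ∩ int C°`. -/
def omegaDual (n : ℕ) (C : Set (En n)) : Set (En n) :=
  Metric.sphere 0 1 ∩ interior (dualCone n C)

/-- A pseudo-cone: nonempty closed convex set not containing `0` with `λK ⊆ K` for `λ ≥ 1`. -/
def IsPseudoCone (n : ℕ) (K : Set (En n)) : Prop :=
  K.Nonempty ∧ IsClosed K ∧ Convex ℝ K ∧ (0 : En n) ∉ K ∧ ∀ l : ℝ, 1 ≤ l → l • K ⊆ K

/-- The recession cone of `K`. -/
def recCone (n : ℕ) (K : Set (En n)) : Set (En n) :=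
  {z | ∀ x ∈ K, ∀ t : ℝ, 0 ≤ t → x + t • z ∈ K}

/-- A `C`-pseudo-cone: a pseudo-cone with recession cone `C`. -/
def IsCPseudoCone (n : ℕ) (C K : Set (En n)) : Prop := IsPseudoCone n K ∧ recCone n K = C

/-- The set of outer unit normal vectors of `K` at `x`. -/
def normalsAt (n : ℕ) (K : Set (En n)) (x : En n) : Set (En n) :=
  {u | ‖u‖ = 1 ∧ ∀ y ∈ K, ⟪y, u⟫ ≤ ⟪x, u⟫}

/-- `ν_K^{-1}(ω)`: the boundary points of `K` whose outer unit normal is unique and lies in `ω`. -/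
def nuInv (n : ℕ) (K ω : Set (En n)) : Set (En n) :=
  {x | x ∈ frontier K ∧ ∃ u ∈ ω, normalsAt n K x = {u}}

open Classical in
/-- The outer unit normal map `ν_K` (junk value `0` where the normal is not unique). -/
def nuMap (n : ℕ) (K : Set (En n)) (x : En n) : En n :=
  if h : ∃ u, normalsAt n K x = {u} then h.choose else 0

/-- `Δ(ω)`: the spherical (angular) distance of `ω` from the boundary of `Ω_{C°}`
(the relative boundary of `Ω_{C°}` in the unit sphere is `closure Ω_{C°} \ Ω_{C°}`,
since `Ω_{C°}` is relatively open in the sphere). -/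
def sphereAngleDist (n : ℕ) (C ω : Set (En n)) : ℝ :=
  sInf {d | ∃ u ∈ ω, ∃ v ∈ closure (omegaDual n C) \ omegaDual n C,
    d = InnerProductGeometry.angle u v}

/-- `b(K)`: the distance of `K` from the origin. -/
def distOrigin (n : ℕ) (K : Set (En n)) : ℝ := Metric.infDist 0 K

/-- `C^-(t) = C ∩ H^-(𝔳, t)`. -/
def Cminus (n : ℕ) (C : Set (En n)) (v : En n) (t : ℝ) : Set (En n) :=
  C ∩ {x | ⟪x, v⟫ ≤ t}

/-- The support function `h_K(u) = sup{⟨y,u⟩ : y ∈ K}`. -/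
def suppFn (n : ℕ) (K : Set (En n)) (u : En n) : ℝ := sSup ((fun y => ⟪y, u⟫) '' K)

/-- `Θ : C∖{0} → (0,∞)` continuous and homogeneous of degree `-q`. -/
def IsThetaWeight (n : ℕ) (C : Set (En n)) (q : ℝ) (Θ : En n → ℝ) : Prop :=
  ContinuousOn Θ (C \ {0}) ∧ (∀ y ∈ C \ {0}, 0 < Θ y) ∧
    ∀ y ∈ C \ {0}, ∀ r : ℝ, 0 < r → Θ (r • y) = r ^ (-q) * Θ y

/-- The `Θ`-weighted `n`-dimensional Hausdorff (Lebesgue) measure `H_Θ^n`. -/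
def HTheta (n : ℕ) (Θ : En n → ℝ) : Measure (En n) :=
  volume.withDensity fun y => ENNReal.ofReal (Θ y)

/-- The `Θ`-weighted cone-volume measure `V_K^Θ(ω) = H_Θ^n(⋃_{x ∈ ν_K^{-1}(ω)} [0,x])`. -/
def coneVol (n : ℕ) (Θ : En n → ℝ) (K ω : Set (En n)) : ℝ≥0∞ :=
  HTheta n Θ (⋃ x ∈ nuInv n K ω, segment ℝ (0 : En n) x)

/-- The (unweighted) cone-volume measure `V_K(ω) = H^n(⋃_{x ∈ ν_K^{-1}(ω)} [0,x])`. -/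
def coneVolU (n : ℕ) (K ω : Set (En n)) : ℝ≥0∞ :=
  volume (⋃ x ∈ nuInv n K ω, segment ℝ (0 : En n) x)

/-- The `Θ`-weighted surface area measure `S_{n-1}^Θ(K,ω) = ∫_{ν_K^{-1}(ω)} Θ dH^{n-1}`. -/
def surfTheta (n : ℕ) (Θ : En n → ℝ) (K ω : Set (En n)) : ℝ≥0∞ :=
  ∫⁻ x in nuInv n K ω, ENNReal.ofReal (Θ x) ∂(μH[(n : ℝ) - 1])

/-- `K ∈ K(C,ϖ)`: `K` is a `C`-pseudo-cone that is `C`-determined by `ϖ`. -/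
def CDetermined (n : ℕ) (C ϖ K : Set (En n)) : Prop :=
  IsCPseudoCone n C K ∧ K = C ∩ ⋂ u ∈ ϖ, {x | ⟪x, u⟫ ≤ suppFn n K u}

/-- The Wulff shape `[g] = C ∩ ⋂_{u ∈ ϖ} {y : ⟨y,u⟩ ≤ -g(u)}`. -/
def wulff (n : ℕ) (C ϖ : Set (En n)) (g : En n → ℝ) : Set (En n) :=
  C ∩ ⋂ u ∈ ϖ, {y | ⟪y, u⟫ ≤ -g u}

/-- The `Θ`-weighted covolume `V_Θ(K) = ∫_{C∖K} Θ dH^n`. -/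
def covol (n : ℕ) (Θ : En n → ℝ) (C K : Set (En n)) : ℝ≥0∞ := HTheta n Θ (C \ K)

/-- The radial function `ρ_K(v) = min{λ : λv ∈ K}`. -/
def rho (n : ℕ) (K : Set (En n)) (v : En n) : ℝ := sInf {t : ℝ | t • v ∈ K}

/-- The radial map `r_K(v) = ρ_K(v) v`. -/
def radMap (n : ℕ) (K : Set (En n)) (v : En n) : En n := rho n K v • v

/-- `α_K^{-1}(ω)`: directions `v ∈ Ω_C` with `r_K(v) ∈ ∂'K` (boundary point in `int C` with
unique outer normal) whose unique outer normal lies in `ω`. -/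
def alphaInv (n : ℕ) (C K ω : Set (En n)) : Set (En n) :=
  {v ∈ omegaC n C | radMap n K v ∈ frontier K ∧ radMap n K v ∈ interior C ∧
    ∃ u ∈ ω, normalsAt n K (radMap n K v) = {u}}

/-- `μ` is the Borel measure on `Ω_{C°}` representing the `Θ`-weighted cone-volume
measure of `K` (extended by `0` outside `Ω_{C°}`). -/
def RepsConeVol (n : ℕ) (C : Set (En n)) (Θ : En n → ℝ) (K : Set (En n))
    (μ : Measure (En n)) : Prop :=
  μ (omegaDual n C)ᶜ = 0 ∧
    ∀ ω, MeasurableSet ω → ω ⊆ omegaDual n C → μ ω = coneVol n Θ K ω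

/-- `μ` is the Borel measure on `Ω_{C°}` representing the `Θ`-weighted surface area
measure of `K` (extended by `0` outside `Ω_{C°}`). -/
def RepsSurf (n : ℕ) (C : Set (En n)) (Θ : En n → ℝ) (K : Set (En n))
    (μ : Measure (En n)) : Prop :=
  μ (omegaDual n C)ᶜ = 0 ∧
    ∀ ω, MeasurableSet ω → ω ⊆ omegaDual n C → μ ω = surfTheta n Θ K ω

/-!
The proof rests on the co-gauge `g_K`, the support function of the points `(-h_K(u))⁻¹ u`, `u ∈ ϖ`:
it is a finite, Lipschitz, sublinear function with `K = {x ∈ C | g_K x ≤ -1}`. By Rademacher's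
theorem it is differentiable almost everywhere, and the outer normal of `K` at the boundary point
`(-g_K y)⁻¹ y` on the ray through `y` is then the direction of `∇ g_K y`. Hence `V_K^Θ` is the
push-forward of `Θ dy` restricted to `C \ K` under the map `y ↦ ∇ g_K y / ‖∇ g_K y‖`.

If `K_j → K₀`, then `g_{K_j} → g_{K₀}` pointwise on `int C`; for convex functions this forces
convergence of the gradients at every common point of differentiability, so the push-forward maps
converge almost everywhere. All the sets `C \ K_j` lie in one ball, on which the weight has finite
mass because `q < n`, and the claim follows by dominated convergence.
-/

open scoped Gradient

section Subgradients

variable {E ι : Type*} [NormedAddCommGroup E] [InnerProductSpace ℝ E]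

lemma tendsto_of_forall_tendsto_inner [FiniteDimensional ℝ E] {l : Filter ι} {f : ι → E} {a : E}
    (h : ∀ e, Tendsto (fun i => ⟪e, f i⟫) l (𝓝 ⟪e, a⟫)) : Tendsto f l (𝓝 a) := by
  let b := stdOrthonormalBasis ℝ E
  simpa only [b.sum_repr'] using
    tendsto_finsetSum Finset.univ fun k _ => (h (b k)).smul_const (b k)

/-- The difference quotients of `f i` along `e` are at least `⟪e, p i⟫` and converge to those of
`f₀`, so letting the step tend to `0` gives `limsup ⟪e, p i⟫ ≤ ⟪e, p₀⟫`. Replacing `e` by `-e`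
gives the other inequality. -/
lemma eventually_inner_lt_of_subgradient {l : Filter ι} {U : Set E} {y : E} (hU : U ∈ 𝓝 y)
    {f : ι → E → ℝ} {f₀ : E → ℝ} {p : ι → E} {p₀ : E}
    (hsub : ∀ i, ∀ z ∈ U, f i y + ⟪z - y, p i⟫ ≤ f i z)
    (hf : ∀ z ∈ U, Tendsto (f · z) l (𝓝 (f₀ z))) (hf₀ : HasFDerivAt f₀ (innerSL ℝ p₀) y)
    (e : E) {r : ℝ} (hr : ⟪e, p₀⟫ < r) : ∀ᶠ i in l, ⟪e, p i⟫ < r := by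
  have hslope : Tendsto (fun t : ℝ => t⁻¹ • (f₀ (y + t • e) - f₀ y)) (𝓝[>] 0) (𝓝 ⟪e, p₀⟫) := by
    simpa only [innerSL_apply_apply, real_inner_comm] using
      (hf₀.hasLineDerivAt e).tendsto_slope_zero_right
  have hmem : ∀ᶠ t : ℝ in 𝓝[>] 0, y + t • e ∈ U := by
    have : Tendsto (fun t : ℝ => y + t • e) (𝓝 0) (𝓝 y) := by
      have hcont : Continuous fun t : ℝ => y + t • e := by fun_prop
      simpa only [zero_smul, add_zero] using hcont.tendsto 0
    exact (this.mono_left nhdsWithin_le_nhds).eventually_mem hU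
  obtain ⟨t, htr, htU, ht : 0 < t⟩ :=
    ((hslope.eventually_lt_const hr).and (hmem.and self_mem_nhdsWithin)).exists
  have hquot : Tendsto (fun i => t⁻¹ • (f i (y + t • e) - f i y)) l
      (𝓝 (t⁻¹ • (f₀ (y + t • e) - f₀ y))) :=
    ((hf _ htU).sub (hf y (mem_of_mem_nhds hU))).const_smul _
  filter_upwards [hquot.eventually_lt_const htr] with i hi
  refine lt_of_le_of_lt ?_ hi
  have := hsub i _ htU
  rw [add_sub_cancel_left, real_inner_smul_left] at this
  rw [smul_eq_mul, le_inv_mul_iff₀ ht]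
  linarith

lemma tendsto_subgradient [FiniteDimensional ℝ E] {l : Filter ι} {U : Set E} {y : E}
    (hU : U ∈ 𝓝 y) {f : ι → E → ℝ} {f₀ : E → ℝ} {p : ι → E} {p₀ : E}
    (hsub : ∀ i, ∀ z ∈ U, f i y + ⟪z - y, p i⟫ ≤ f i z)
    (hf : ∀ z ∈ U, Tendsto (f · z) l (𝓝 (f₀ z))) (hf₀ : HasFDerivAt f₀ (innerSL ℝ p₀) y) :
    Tendsto p l (𝓝 p₀) := by
  refine tendsto_of_forall_tendsto_inner fun e => tendsto_order.2 ⟨fun r hr => ?_, fun r hr =>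
    eventually_inner_lt_of_subgradient hU hsub hf hf₀ e hr⟩
  have hneg : ⟪-e, p₀⟫ < -r := by rwa [inner_neg_left, neg_lt_neg_iff]
  filter_upwards [eventually_inner_lt_of_subgradient hU hsub hf hf₀ (-e) hneg] with i hi
  rwa [inner_neg_left, neg_lt_neg_iff] at hi

lemma subgradient_eq_of_hasFDerivAt {U : Set E} {y : E} (hU : U ∈ 𝓝 y) {f : E → ℝ} {p p₀ : E}
    (hsub : ∀ z ∈ U, f y + ⟪z - y, p⟫ ≤ f z) (hf : HasFDerivAt f (innerSL ℝ p₀) y) : p = p₀ := by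
  have hle (e : E) : ⟪e, p⟫ ≤ ⟪e, p₀⟫ := le_of_forall_gt fun r hr =>
    (eventually_inner_lt_of_subgradient (l := (atTop : Filter ℕ)) hU (fun _ => hsub)
      (fun _ _ => tendsto_const_nhds) hf e hr).exists.choose_spec
  exact ext_inner_left ℝ fun e => (hle e).antisymm (by simpa using hle (-e))

lemma hasFDerivAt_innerSL_gradient [CompleteSpace E] {f : E → ℝ} {y : E}
    (hf : DifferentiableAt ℝ f y) : HasFDerivAt f (innerSL ℝ (∇ f y)) y :=
  hf.hasGradientAt.hasFDerivAt

lemma measurable_gradient [CompleteSpace E] [MeasurableSpace E] [BorelSpace E] (f : E → ℝ) :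
    Measurable (∇ f) :=
  (InnerProductSpace.toDual ℝ E).symm.continuous.measurable.comp (measurable_fderiv ℝ f)

lemma hasFDerivAt_const_mul_innerSL_gradient [CompleteSpace E] {f : E → ℝ} {y : E}
    (hf : DifferentiableAt ℝ f y) (t : ℝ) :
    HasFDerivAt (fun z => t * f z) (innerSL ℝ (t • ∇ f y)) y := by
  rw [map_smul]
  exact (hasFDerivAt_innerSL_gradient hf).const_mul t

end Subgradients

section HausdorffConvergence

variable {ι : Type*} {l : Filter ι}

lemma eventually_notMem_of_tendsto_hausdorffDist {X : Type*} [PseudoMetricSpace X]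
    {A : ι → Set X} {A₀ : Set X} (hA₀ : IsClosed A₀) (hne : A₀.Nonempty)
    (hfin : ∀ i, Metric.hausdorffEDist (A i) A₀ ≠ ⊤)
    (hA : Tendsto (fun i => Metric.hausdorffDist (A i) A₀) l (𝓝 0)) {x : X} (hx : x ∉ A₀) :
    ∀ᶠ i in l, x ∉ A i := by
  have hpos := (hA₀.notMem_iff_infDist_pos hne).1 hx
  filter_upwards [hA.eventually_lt_const hpos] with i hi hxi
  exact hi.not_ge (Metric.infDist_le_hausdorffDist_of_mem hxi (hfin i))

lemma mem_of_hausdorffDist_lt_of_closedBall_subset {E : Type*} [NormedAddCommGroup E]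
    [InnerProductSpace ℝ E] [CompleteSpace E] {A B : Set E} (hcl : IsClosed A) (hcv : Convex ℝ A)
    (hne : A.Nonempty) (hfin : Metric.hausdorffEDist A B ≠ ⊤) {x : E} {r : ℝ} (hr : 0 ≤ r)
    (hball : Metric.closedBall x r ⊆ B) (hlt : Metric.hausdorffDist A B < r) : x ∈ A := by
  by_contra hx
  obtain ⟨a, ha, hmin⟩ := exists_norm_eq_iInf_of_complete_convex hne hcl.isComplete hcv x
  have hobtuse := (norm_eq_iInf_iff_real_inner_le_zero hcv ha).1 hmin
  have hxa : 0 < ‖x - a‖ := norm_pos_iff.2 (sub_ne_zero.2 fun h => hx (h ▸ ha))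
  set w := (r / ‖x - a‖) • (x - a) with hw
  have hwnorm : ‖w‖ = r := by
    rw [hw, norm_smul, Real.norm_of_nonneg (by positivity), div_mul_cancel₀ _ hxa.ne']
  have hinner : ⟪x - a, w⟫ = ‖x - a‖ * r := by
    rw [hw, real_inner_smul_right, real_inner_self_eq_norm_sq]
    field_simp
  -- `x + w` lies in `B`, but its distance to `A` is `‖x - a‖ + r`.
  obtain ⟨b, hb, hdist⟩ := Metric.exists_dist_lt_of_hausdorffDist_lt'
    (hball (by simp [hwnorm] : x + w ∈ Metric.closedBall x r)) hlt hfin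
  rw [dist_eq_norm_sub'] at hdist
  have hcs := real_inner_le_norm (x - a) (x + w - b)
  have hsplit : x + w - b = (x - a) + w - (b - a) := by abel
  have hexpand : ⟪x - a, x + w - b⟫ = ‖x - a‖ ^ 2 + ‖x - a‖ * r - ⟪x - a, b - a⟫ := by
    rw [hsplit, inner_sub_right, inner_add_right, real_inner_self_eq_norm_sq, hinner]
  nlinarith [hobtuse b hb]

lemma eventually_mem_of_tendsto_hausdorffDist {E : Type*} [NormedAddCommGroup E]
    [InnerProductSpace ℝ E] [CompleteSpace E] {A : ι → Set E} {A₀ : Set E}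
    (hcl : ∀ i, IsClosed (A i)) (hcv : ∀ i, Convex ℝ (A i)) (hne : ∀ i, (A i).Nonempty)
    (hfin : ∀ i, Metric.hausdorffEDist (A i) A₀ ≠ ⊤)
    (hA : Tendsto (fun i => Metric.hausdorffDist (A i) A₀) l (𝓝 0)) {x : E}
    (hx : x ∈ interior A₀) : ∀ᶠ i in l, x ∈ A i := by
  obtain ⟨r, hr, hball⟩ := Metric.nhds_basis_closedBall.mem_iff.1 (mem_interior_iff_mem_nhds.1 hx)
  filter_upwards [hA.eventually_lt_const hr] with i hi
  exact mem_of_hausdorffDist_lt_of_closedBall_subset (hcl i) (hcv i) (hne i) (hfin i) hr.le hball hi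

end HausdorffConvergence

lemma tendsto_setIntegral_of_eventually_mem_iff {α ι G : Type*} [MeasurableSpace α]
    [NormedAddCommGroup G] [NormedSpace ℝ G] {μ : Measure α} {l : Filter ι}
    [l.IsCountablyGenerated] {A : ι → Set α} {A₀ D : Set α} {F : ι → α → G} {F₀ : α → G} {M : ℝ}
    (hA : ∀ i, MeasurableSet (A i)) (hA₀ : MeasurableSet A₀) (hD : μ D ≠ ⊤)
    (hAD : ∀ i, A i ⊆ D) (hA₀D : A₀ ⊆ D) (hF : ∀ i, AEStronglyMeasurable (F i) μ)
    (hM : ∀ i x, ‖F i x‖ ≤ M) (hmem : ∀ᵐ x ∂μ, ∀ᶠ i in l, x ∈ A i ↔ x ∈ A₀)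
    (hlim : ∀ᵐ x ∂μ, x ∈ A₀ → Tendsto (F · x) l (𝓝 (F₀ x))) :
    Tendsto (fun i => ∫ x in A i, F i x ∂μ) l (𝓝 (∫ x in A₀, F₀ x ∂μ)) := by
  have hrestrict {B : Set α} (hB : MeasurableSet B) (hBD : B ⊆ D) (f : α → G) :
      ∫ x in B, f x ∂μ = ∫ x in D, B.indicator f x ∂μ := by
    rw [setIntegral_indicator hB, inter_eq_self_of_subset_right hBD]
  simp only [hrestrict (hA _) (hAD _), hrestrict hA₀ hA₀D]
  have : IsFiniteMeasure (μ.restrict D) := isFiniteMeasure_restrict.2 hD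
  refine tendsto_integral_filter_of_norm_le_const (.of_forall fun i =>
    ((hF i).indicator (hA i)).restrict) ⟨M, .of_forall fun i => .of_forall fun x => ?_⟩ ?_
  · exact (norm_indicator_le_norm_self _ _).trans (hM i x)
  · filter_upwards [ae_restrict_of_ae hmem, ae_restrict_of_ae hlim] with x hx hxlim
    by_cases hxA : x ∈ A₀
    · rw [indicator_of_mem hxA]
      refine (hxlim hxA).congr' ?_
      filter_upwards [hx] with i hi
      rw [indicator_of_mem (hi.2 hxA)]
    · rw [indicator_of_notMem hxA]
      refine tendsto_const_nhds.congr' ?_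
      filter_upwards [hx] with i hi
      rw [indicator_of_notMem (hi.not.2 hxA)]

section SupportFunctions

variable {n : ℕ} {P : Set (En n)}

lemma suppFn_smul (P : Set (En n)) {s : ℝ} (hs : 0 ≤ s) (y : En n) :
    suppFn n P (s • y) = s * suppFn n P y := by
  rw [suppFn, suppFn, ← smul_eq_mul, ← Real.sSup_smul_of_nonneg hs]
  congr 1
  ext a
  simp only [mem_image, mem_smul_set, exists_exists_and_eq_and, real_inner_smul_right, smul_eq_mul]

lemma inner_le_suppFn {y p : En n} (hbdd : BddAbove ((fun p => ⟪p, y⟫) '' P)) (hp : p ∈ P) :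
    ⟪p, y⟫ ≤ suppFn n P y :=
  le_csSup hbdd (mem_image_of_mem _ hp)

lemma suppFn_le (hne : P.Nonempty) {y : En n} {a : ℝ} (h : ∀ p ∈ P, ⟪p, y⟫ ≤ a) :
    suppFn n P y ≤ a :=
  csSup_le (hne.image _) (forall_mem_image.2 h)

lemma convexOn_suppFn (hne : P.Nonempty) {s : Set (En n)} (hs : Convex ℝ s)
    (hbdd : ∀ y ∈ s, BddAbove ((fun p => ⟪p, y⟫) '' P)) : ConvexOn ℝ s (suppFn n P) := by
  refine ⟨hs, fun y hy z hz a b ha hb _ => suppFn_le hne fun p hp => ?_⟩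
  rw [inner_add_right, real_inner_smul_right, real_inner_smul_right]
  exact add_le_add (mul_le_mul_of_nonneg_left (inner_le_suppFn (hbdd y hy) hp) ha)
    (mul_le_mul_of_nonneg_left (inner_le_suppFn (hbdd z hz) hp) hb)

lemma bddAbove_image_inner (hP : Bornology.IsBounded P) (y : En n) :
    BddAbove ((fun p => ⟪p, y⟫) '' P) := by
  obtain ⟨B, hB⟩ := hP.exists_norm_le
  refine ⟨B * ‖y‖, forall_mem_image.2 fun p hp => ?_⟩
  exact (real_inner_le_norm p y).trans (by gcongr; exact hB p hp)

lemma suppFn_le_iff (hP : Bornology.IsBounded P) (hne : P.Nonempty) {y : En n} {a : ℝ} :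
    suppFn n P y ≤ a ↔ ∀ p ∈ P, ⟪p, y⟫ ≤ a :=
  ⟨fun h _ hp => (inner_le_suppFn (bddAbove_image_inner hP y) hp).trans h, suppFn_le hne⟩

lemma exists_inner_eq_suppFn (hP : IsCompact P) (hne : P.Nonempty) (y : En n) :
    ∃ p ∈ P, ⟪p, y⟫ = suppFn n P y := by
  obtain ⟨p, hp, h⟩ := hP.exists_sSup_image_eq hne (f := fun p => ⟪p, y⟫) (by fun_prop)
  exact ⟨p, hp, h.symm⟩

lemma suppFn_add_inner_le (hP : Bornology.IsBounded P) {y p : En n} (hp : p ∈ P)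
    (hy : ⟪p, y⟫ = suppFn n P y) (z : En n) : suppFn n P y + ⟪z - y, p⟫ ≤ suppFn n P z := by
  rw [← hy, real_inner_comm p (z - y), ← inner_add_right, add_sub_cancel]
  exact inner_le_suppFn (bddAbove_image_inner hP z) hp

lemma exists_lipschitzWith_suppFn (hP : Bornology.IsBounded P) (hne : P.Nonempty) :
    ∃ B : ℝ≥0, LipschitzWith B (suppFn n P) := by
  obtain ⟨B, hB⟩ := hP.exists_norm_le
  refine ⟨B.toNNReal, LipschitzWith.of_le_add_mul' B fun y z => suppFn_le hne fun p hp => ?_⟩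
  have hle : ⟪p, y - z⟫ ≤ B * dist y z := by
    rw [dist_eq_norm]
    exact (real_inner_le_norm p _).trans (by gcongr; exact hB p hp)
  rw [inner_sub_right] at hle
  linarith [inner_le_suppFn (bddAbove_image_inner hP z) hp]

lemma continuous_suppFn (hP : Bornology.IsBounded P) (hne : P.Nonempty) :
    Continuous (suppFn n P) :=
  (exists_lipschitzWith_suppFn hP hne).choose_spec.continuous

lemma ae_differentiableAt_suppFn (hP : Bornology.IsBounded P) (hne : P.Nonempty) :
    ∀ᵐ y, DifferentiableAt ℝ (suppFn n P) y :=
  (exists_lipschitzWith_suppFn hP hne).choose_spec.ae_differentiableAt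

lemma gradient_suppFn_mem (hP : IsCompact P) (hne : P.Nonempty) {y : En n}
    (hd : DifferentiableAt ℝ (suppFn n P) y) :
    ∇ (suppFn n P) y ∈ P ∧ ⟪∇ (suppFn n P) y, y⟫ = suppFn n P y := by
  obtain ⟨p, hp, hpy⟩ := exists_inner_eq_suppFn hP hne y
  rw [← subgradient_eq_of_hasFDerivAt univ_mem
    (fun z _ => suppFn_add_inner_le hP.isBounded hp hpy z) (hasFDerivAt_innerSL_gradient hd)]
  exact ⟨hp, hpy⟩

end SupportFunctions

section Cones

variable {n : ℕ} {C : Set (En n)}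

lemma exists_inner_le_neg_mul_norm {ϖ : Set (En n)} (hϖ : IsCompact ϖ)
    (hsub : ϖ ⊆ interior (dualCone n C)) :
    ∃ c > (0 : ℝ), ∀ u ∈ ϖ, ∀ y ∈ C, ⟪y, u⟫ ≤ -(c * ‖y‖) := by
  obtain ⟨δ, hδ, h⟩ := hϖ.exists_cthickening_subset_open isOpen_interior hsub
  refine ⟨δ, hδ, fun u hu y hy => ?_⟩
  rcases eq_or_ne y 0 with rfl | hy0
  · simp
  have hy_pos : 0 < ‖y‖ := norm_pos_iff.2 hy0
  have hdist : dist (u + (δ / ‖y‖) • y) u ≤ δ := by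
    rw [dist_eq_norm, add_sub_cancel_left, norm_smul, Real.norm_of_nonneg (by positivity),
      div_mul_cancel₀ _ hy_pos.ne']
  have hdual := interior_subset (h (Metric.mem_cthickening_of_dist_le _ u _ _ hu hdist)) y hy
  rw [inner_add_left, real_inner_smul_left, real_inner_self_eq_norm_sq, real_inner_comm] at hdual
  have hmul : δ / ‖y‖ * ‖y‖ ^ 2 = δ * ‖y‖ := by field_simp
  linarith

lemma inner_neg_of_mem_interior {u y : En n} (hu : u ∈ dualCone n C) (hu0 : u ≠ 0)
    (hy : y ∈ interior C) : ⟪y, u⟫ < 0 := by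
  have hcont : Continuous fun t : ℝ => y + t • u := by fun_prop
  have hlim : Tendsto (fun t : ℝ => y + t • u) (𝓝[>] 0) (𝓝 y) := by
    simpa only [zero_smul, add_zero] using (hcont.tendsto 0).mono_left nhdsWithin_le_nhds
  obtain ⟨t, htC, ht : 0 < t⟩ :=
    ((hlim.eventually_mem (mem_interior_iff_mem_nhds.1 hy)).and self_mem_nhdsWithin).exists
  have hdual := hu _ htC
  rw [inner_add_right, real_inner_smul_right, real_inner_comm] at hdual
  have : 0 < t * ⟪u, u⟫ := mul_pos ht (real_inner_self_pos.2 hu0)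
  linarith

lemma isBounded_Cminus {v : En n} (hv : -v ∈ interior (dualCone n C)) (t : ℝ) :
    Bornology.IsBounded (Cminus n C v t) := by
  obtain ⟨c, hc, h⟩ := exists_inner_le_neg_mul_norm isCompact_singleton
    (singleton_subset_iff.2 hv)
  refine isBounded_iff_forall_norm_le.2 ⟨t / c, fun y hy => ?_⟩
  have hyv := h _ (mem_singleton _) y hy.1
  rw [inner_neg_right] at hyv
  have hyt : ⟪y, v⟫ ≤ t := hy.2
  rw [le_div_iff₀ hc]
  linarith

lemma isClosed_Cminus (hC : IsClosed C) (v : En n) (t : ℝ) : IsClosed (Cminus n C v t) :=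
  hC.inter (isClosed_le (by fun_prop) continuous_const)

lemma convex_Cminus (hC : Convex ℝ C) (v : En n) (t : ℝ) : Convex ℝ (Cminus n C v t) :=
  hC.inter (convex_halfSpace_le ⟨fun x y => inner_add_left x y v,
    fun r x => real_inner_smul_left x v r⟩ t)

lemma convex_dualCone (C : Set (En n)) : Convex ℝ (dualCone n C) := by
  intro x hx z hz a b ha hb _ y hy
  rw [inner_add_left, real_inner_smul_left, real_inner_smul_left]
  exact add_nonpos (mul_nonpos_of_nonneg_of_nonpos ha (hx y hy))
    (mul_nonpos_of_nonneg_of_nonpos hb (hz y hy))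

namespace IsGoodCone

lemma smul_mem_interior (hC : IsGoodCone n C) {r : ℝ} (hr : 0 < r) {y : En n}
    (hy : y ∈ interior C) : r • y ∈ interior C := by
  have hsub : r • interior C ⊆ C := by
    rintro _ ⟨x, hx, rfl⟩
    exact hC.2.2.1 x (interior_subset hx) r hr.le
  exact interior_maximal hsub (isOpen_interior.smul₀ hr.ne') (smul_mem_smul_set hy)

lemma ae_mem_interior (hC : IsGoodCone n C) : ∀ᵐ y, y ∈ C → y ∈ interior C := by
  filter_upwards [measure_eq_zero_iff_ae_notMem.1 (hC.2.1.addHaar_frontier volume)] with y hy hyC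
  by_contra h
  exact hy (hC.1.frontier_eq ▸ ⟨hyC, h⟩)

end IsGoodCone

end Cones

/-- The admissible sets `ϖ` of outer normals: nonempty compact subsets of `Ω_{C°}`. -/
structure IsDirectionSet (n : ℕ) (C ϖ : Set (En n)) : Prop where
  nonempty : ϖ.Nonempty
  isCompact : IsCompact ϖ
  subset_omegaDual : ϖ ⊆ omegaDual n C

namespace IsDirectionSet

variable {n : ℕ} {C ϖ : Set (En n)} {u : En n}

lemma norm_eq_one (hϖ : IsDirectionSet n C ϖ) (hu : u ∈ ϖ) : ‖u‖ = 1 :=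
  mem_sphere_zero_iff_norm.1 (hϖ.subset_omegaDual hu).1

lemma subset_interior (hϖ : IsDirectionSet n C ϖ) : ϖ ⊆ interior (dualCone n C) :=
  fun _ hu => (hϖ.subset_omegaDual hu).2

end IsDirectionSet

/-- The points `(-h_K(u))⁻¹ u`, `u ∈ ϖ`, of the boundary of the copolar set
`{p | ⟪p, x⟫ ≤ -1 ∀ x ∈ K}` of `K`. The sign makes them positive multiples of the normals. -/
def copolarPts (n : ℕ) (ϖ K : Set (En n)) : Set (En n) :=
  (fun u => (-suppFn n K u)⁻¹ • u) '' ϖ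

/-- The support function of `copolarPts`. On `int C` it is `-1 / ρ_K`, and
`K = {x ∈ C | coGauge n ϖ K x ≤ -1}`. -/
def coGauge (n : ℕ) (ϖ K : Set (En n)) : En n → ℝ := suppFn n (copolarPts n ϖ K)

/-- The radial Gauss map `α_K = ν_K ∘ r_K`, extended `0`-homogeneously from `Ω_C` to `int C`: the
outer normal of `K` at the boundary point on the ray through `y`, encoded as the direction of the
gradient of the co-gauge (junk value `0` where the co-gauge is not differentiable). -/
def radialGauss (n : ℕ) (ϖ K : Set (En n)) (y : En n) : En n :=
  NormedSpace.normalize (∇ (coGauge n ϖ K) y)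

lemma coGauge_smul {n : ℕ} (ϖ K : Set (En n)) {s : ℝ} (hs : 0 ≤ s) (y : En n) :
    coGauge n ϖ K (s • y) = s * coGauge n ϖ K y :=
  suppFn_smul _ hs y

lemma measurable_radialGauss {n : ℕ} (ϖ K : Set (En n)) : Measurable (radialGauss n ϖ K) := by
  have := measurable_gradient (coGauge n ϖ K)
  unfold radialGauss NormedSpace.normalize
  fun_prop

lemma IsDirectionSet.copolarPts_nonempty {n : ℕ} {C ϖ : Set (En n)} (hϖ : IsDirectionSet n C ϖ)
    (K : Set (En n)) : (copolarPts n ϖ K).Nonempty :=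
  hϖ.nonempty.image _

namespace CDetermined

variable {n : ℕ} {C ϖ K : Set (En n)} {x y u w : En n}

lemma nonempty (hK : CDetermined n C ϖ K) : K.Nonempty := hK.1.1.1

lemma isClosed (hK : CDetermined n C ϖ K) : IsClosed K := hK.1.1.2.1

lemma convex (hK : CDetermined n C ϖ K) : Convex ℝ K := hK.1.1.2.2.1

lemma zero_notMem (hK : CDetermined n C ϖ K) : (0 : En n) ∉ K := hK.1.1.2.2.2.1

lemma smul_mem (hK : CDetermined n C ϖ K) {r : ℝ} (hr : 1 ≤ r) (hx : x ∈ K) : r • x ∈ K :=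
  hK.1.1.2.2.2.2 r hr (smul_mem_smul_set hx)

lemma mem_iff_forall_inner_le (hK : CDetermined n C ϖ K) :
    x ∈ K ↔ x ∈ C ∧ ∀ u ∈ ϖ, ⟪x, u⟫ ≤ suppFn n K u := by
  conv_lhs => rw [hK.2]
  simp only [mem_inter_iff, mem_iInter, mem_ofPred_eq]

lemma subset (hK : CDetermined n C ϖ K) : K ⊆ C := fun _ hx => (hK.mem_iff_forall_inner_le.1 hx).1

lemma bddAbove_image_inner (hK : CDetermined n C ϖ K) (hu : u ∈ dualCone n C) :
    BddAbove ((fun y => ⟪y, u⟫) '' K) :=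
  ⟨0, forall_mem_image.2 fun y hy => (real_inner_comm u y).trans_le (hu y (hK.subset hy))⟩

lemma suppFn_neg (hϖ : IsDirectionSet n C ϖ) (hK : CDetermined n C ϖ K) (hu : u ∈ ϖ) :
    suppFn n K u < 0 := by
  obtain ⟨c, hc, hbound⟩ := exists_inner_le_neg_mul_norm hϖ.isCompact hϖ.subset_interior
  have hdist : 0 < Metric.infDist 0 K :=
    (hK.isClosed.notMem_iff_infDist_pos hK.nonempty).1 hK.zero_notMem
  refine (suppFn_le hK.nonempty (a := -(c * Metric.infDist 0 K)) fun y hy => ?_).trans_lt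
    (neg_neg_of_pos (mul_pos hc hdist))
  have hle : Metric.infDist 0 K ≤ ‖y‖ := dist_zero_left y ▸ Metric.infDist_le_dist_of_mem hy
  exact (hbound u hu y (hK.subset hy)).trans (by gcongr)

lemma isCompact_copolarPts (hϖ : IsDirectionSet n C ϖ) (hK : CDetermined n C ϖ K) :
    IsCompact (copolarPts n ϖ K) := by
  have hconvex : ConvexOn ℝ (interior (dualCone n C)) (suppFn n K) :=
    convexOn_suppFn hK.nonempty (convex_dualCone C).interior fun u hu =>
      hK.bddAbove_image_inner (interior_subset hu)
  have hcont : ContinuousOn (suppFn n K) ϖ :=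
    (hconvex.continuousOn isOpen_interior).mono hϖ.subset_interior
  exact hϖ.isCompact.image_of_continuousOn
    ((hcont.neg.inv₀ fun u hu => (neg_pos.2 (hK.suppFn_neg hϖ hu)).ne').smul continuousOn_id)

lemma continuous_coGauge (hϖ : IsDirectionSet n C ϖ) (hK : CDetermined n C ϖ K) :
    Continuous (coGauge n ϖ K) :=
  continuous_suppFn (hK.isCompact_copolarPts hϖ).isBounded (hϖ.copolarPts_nonempty K)

lemma ae_differentiableAt_coGauge (hϖ : IsDirectionSet n C ϖ) (hK : CDetermined n C ϖ K) :
    ∀ᵐ y, DifferentiableAt ℝ (coGauge n ϖ K) y :=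
  ae_differentiableAt_suppFn (hK.isCompact_copolarPts hϖ).isBounded (hϖ.copolarPts_nonempty K)

lemma mem_iff_coGauge_le (hϖ : IsDirectionSet n C ϖ) (hK : CDetermined n C ϖ K) :
    x ∈ K ↔ x ∈ C ∧ coGauge n ϖ K x ≤ -1 := by
  rw [hK.mem_iff_forall_inner_le, coGauge,
    suppFn_le_iff (hK.isCompact_copolarPts hϖ).isBounded (hϖ.copolarPts_nonempty K), copolarPts,
    forall_mem_image]
  refine and_congr_right fun _ => forall₂_congr fun u hu => ?_
  rw [real_inner_smul_left, real_inner_comm, inv_mul_le_iff₀ (neg_pos.2 (hK.suppFn_neg hϖ hu)),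
    mul_neg_one, neg_neg]

lemma coGauge_neg (hϖ : IsDirectionSet n C ϖ) (hK : CDetermined n C ϖ K) (hy : y ∈ interior C) :
    coGauge n ϖ K y < 0 := by
  obtain ⟨_, ⟨u, hu, rfl⟩, heq⟩ :=
    exists_inner_eq_suppFn (hK.isCompact_copolarPts hϖ) (hϖ.copolarPts_nonempty K) y
  rw [coGauge, ← heq, real_inner_smul_left, real_inner_comm]
  refine mul_neg_of_pos_of_neg (inv_pos.2 (neg_pos.2 (hK.suppFn_neg hϖ hu))) ?_
  exact inner_neg_of_mem_interior (interior_subset (hϖ.subset_interior hu))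
    (norm_ne_zero_iff.1 (by simp [hϖ.norm_eq_one hu])) hy

lemma mem_interior_iff_coGauge_lt (hϖ : IsDirectionSet n C ϖ) (hK : CDetermined n C ϖ K) :
    x ∈ interior K ↔ x ∈ interior C ∧ coGauge n ϖ K x < -1 := by
  constructor
  · refine fun hx => ⟨interior_mono hK.subset hx, ?_⟩
    have hcont : Continuous fun t : ℝ => t • x := by fun_prop
    have hlim : Tendsto (fun t : ℝ => t • x) (𝓝[<] 1) (𝓝 x) := by
      simpa only [one_smul] using (hcont.tendsto 1).mono_left nhdsWithin_le_nhds
    obtain ⟨t, htK, ht0, ht1⟩ := ((hlim.eventually_mem (mem_interior_iff_mem_nhds.1 hx)).and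
      (Ioo_mem_nhdsLT one_pos)).exists
    have hle := ((hK.mem_iff_coGauge_le hϖ).1 htK).2
    rw [coGauge_smul ϖ K ht0.le] at hle
    nlinarith
  · rintro ⟨hxC, hx⟩
    refine interior_maximal (fun z hz => (hK.mem_iff_coGauge_le hϖ).2
      ⟨interior_subset hz.1, hz.2.le⟩) (isOpen_interior.inter
      (isOpen_lt (hK.continuous_coGauge hϖ) continuous_const)) ⟨hxC, hx⟩

lemma inv_smul_mem_iff (hC : IsGoodCone n C) (hϖ : IsDirectionSet n C ϖ)
    (hK : CDetermined n C ϖ K) (hy : y ∈ interior C) {s : ℝ} (hs : 0 < s) :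
    s⁻¹ • y ∈ K ↔ s ≤ -coGauge n ϖ K y := by
  rw [hK.mem_iff_coGauge_le hϖ, coGauge_smul ϖ K (inv_nonneg.2 hs.le), inv_mul_le_iff₀ hs,
    and_iff_right (interior_subset (hC.smul_mem_interior (inv_pos.2 hs) hy)), mul_neg_one, le_neg]

lemma inv_smul_mem_interior_iff (hC : IsGoodCone n C) (hϖ : IsDirectionSet n C ϖ)
    (hK : CDetermined n C ϖ K) (hy : y ∈ interior C) {s : ℝ} (hs : 0 < s) :
    s⁻¹ • y ∈ interior K ↔ s < -coGauge n ϖ K y := by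
  rw [hK.mem_interior_iff_coGauge_lt hϖ, coGauge_smul ϖ K (inv_nonneg.2 hs.le), inv_mul_lt_iff₀ hs,
    and_iff_right (hC.smul_mem_interior (inv_pos.2 hs) hy), mul_neg_one, lt_neg]

lemma inv_smul_mem_frontier_iff (hC : IsGoodCone n C) (hϖ : IsDirectionSet n C ϖ)
    (hK : CDetermined n C ϖ K) (hy : y ∈ interior C) {s : ℝ} (hs : 0 < s) :
    s⁻¹ • y ∈ frontier K ↔ s = -coGauge n ϖ K y := by
  rw [hK.isClosed.frontier_eq, Set.mem_sdiff, hK.inv_smul_mem_iff hC hϖ hy hs,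
    hK.inv_smul_mem_interior_iff hC hϖ hy hs, not_lt, le_antisymm_iff]

lemma radialGauss_spec (hϖ : IsDirectionSet n C ϖ) (hK : CDetermined n C ϖ K)
    (hd : DifferentiableAt ℝ (coGauge n ϖ K) y) :
    radialGauss n ϖ K y ∈ ϖ ∧
      ⟪y, radialGauss n ϖ K y⟫ = -coGauge n ϖ K y * suppFn n K (radialGauss n ϖ K y) := by
  obtain ⟨⟨u, hu, hgrad⟩, heq⟩ :=
    gradient_suppFn_mem (hK.isCompact_copolarPts hϖ) (hϖ.copolarPts_nonempty K) hd
  have hneg := hK.suppFn_neg hϖ hu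
  have hgauss : radialGauss n ϖ K y = u := by
    rw [radialGauss, coGauge, ← hgrad,
      NormedSpace.normalize_smul_of_pos (inv_pos.2 (neg_pos.2 hneg)),
      NormedSpace.normalize_eq_self_of_norm_eq_one (hϖ.norm_eq_one hu)]
  rw [← hgrad, real_inner_smul_left, real_inner_comm] at heq
  refine ⟨hgauss ▸ hu, ?_⟩
  rw [hgauss, coGauge, ← heq]
  have := hneg.ne
  field_simp

/-- Where the ray through `z` meets the boundary of `K`, the inequality defining the normal `w`
reads `⟪z, w⟫ ≤ t * coGauge z` with `t = -⟪x, w⟫`, so `w` is a subgradient of `t * coGauge`. -/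
lemma eq_radialGauss_of_mem_normalsAt (hC : IsGoodCone n C) (hϖ : IsDirectionSet n C ϖ)
    (hK : CDetermined n C ϖ K) (hy : y ∈ interior C) (hd : DifferentiableAt ℝ (coGauge n ϖ K) y)
    (hw : w ∈ normalsAt n K ((-coGauge n ϖ K y)⁻¹ • y)) : w = radialGauss n ϖ K y := by
  obtain ⟨hw1, hw⟩ := hw
  set x := (-coGauge n ϖ K y)⁻¹ • y
  have hray {z : En n} (hz : z ∈ interior C) : (-coGauge n ϖ K z)⁻¹ • z ∈ K :=
    (hK.inv_smul_mem_iff hC hϖ hz (neg_pos.2 (hK.coGauge_neg hϖ hz))).2 le_rfl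
  have hx : ⟪y, w⟫ = -⟪x, w⟫ * coGauge n ϖ K y := by
    have := (hK.coGauge_neg hϖ hy).ne
    rw [real_inner_smul_left]
    field_simp
  have ht : 0 ≤ -⟪x, w⟫ := by
    have := hw _ (hK.smul_mem one_le_two (hray hy))
    rw [real_inner_smul_left] at this
    linarith
  have hsub (z) (hz : z ∈ interior C) :
      -⟪x, w⟫ * coGauge n ϖ K y + ⟪z - y, w⟫ ≤ -⟪x, w⟫ * coGauge n ϖ K z := by
    have hz_pos := neg_pos.2 (hK.coGauge_neg hϖ hz)
    have := hw _ (hray hz)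
    rw [real_inner_smul_left, inv_mul_le_iff₀ hz_pos] at this
    rw [inner_sub_left, hx]
    linarith
  have hgrad : w = -⟪x, w⟫ • ∇ (coGauge n ϖ K) y := subgradient_eq_of_hasFDerivAt
    (isOpen_interior.mem_nhds hy) hsub (hasFDerivAt_const_mul_innerSL_gradient hd _)
  have ht_ne : -⟪x, w⟫ ≠ 0 := fun h => by
    rw [h, zero_smul] at hgrad
    simp [hgrad] at hw1
  rw [radialGauss, ← NormedSpace.normalize_smul_of_pos (ht.lt_of_ne' ht_ne), ← hgrad,
    NormedSpace.normalize_eq_self_of_norm_eq_one hw1]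

lemma normalsAt_eq_singleton (hC : IsGoodCone n C) (hϖ : IsDirectionSet n C ϖ)
    (hK : CDetermined n C ϖ K) (hy : y ∈ interior C)
    (hd : DifferentiableAt ℝ (coGauge n ϖ K) y) :
    normalsAt n K ((-coGauge n ϖ K y)⁻¹ • y) = {radialGauss n ϖ K y} := by
  obtain ⟨hmem, heq⟩ := hK.radialGauss_spec hϖ hd
  refine eq_singleton_iff_unique_mem.2
    ⟨⟨hϖ.norm_eq_one hmem, fun z hz => ?_⟩, fun w => hK.eq_radialGauss_of_mem_normalsAt hC hϖ hy hd⟩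
  rw [real_inner_smul_left, heq,
    inv_mul_cancel_left₀ (neg_pos.2 (hK.coGauge_neg hϖ hy)).ne']
  exact (hK.mem_iff_forall_inner_le.1 hz).2 _ hmem

lemma mem_iUnion_segment_iff (hC : IsGoodCone n C) (hϖ : IsDirectionSet n C ϖ)
    (hK : CDetermined n C ϖ K) (hy : y ∈ interior C) (hyK : y ∉ frontier K)
    (hd : DifferentiableAt ℝ (coGauge n ϖ K) y) (ω : Set (En n)) :
    y ∈ ⋃ x ∈ nuInv n K ω, segment ℝ 0 x ↔ radialGauss n ϖ K y ∈ ω ∧ y ∉ K := by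
  have hneg := hK.coGauge_neg hϖ hy
  have hnormals := hK.normalsAt_eq_singleton hC hϖ hy hd
  have hmem : y ∉ K ↔ -coGauge n ϖ K y < 1 := by
    have := hK.inv_smul_mem_iff hC hϖ hy one_pos
    rw [inv_one, one_smul] at this
    rw [this, not_le]
  have hmem_frontier {s : ℝ} (hs : 0 < s) := hK.inv_smul_mem_frontier_iff hC hϖ hy hs
  simp only [mem_iUnion₂, segment_eq_image, zero_add, smul_zero, mem_image, exists_prop]
  constructor
  · rintro ⟨x, ⟨hx, u, hu, hux⟩, s, ⟨hs0, hs1⟩, hsx⟩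
    have hs : 0 < s := hs0.lt_of_ne' fun h => by
      rw [← hsx, coGauge_smul ϖ K hs0, h, zero_mul] at hneg
      exact hneg.false
    obtain rfl : x = s⁻¹ • y := (inv_smul_eq_iff₀ hs.ne').2 hsx.symm |>.symm
    obtain rfl : s = -coGauge n ϖ K y := (hmem_frontier hs).1 hx
    refine ⟨singleton_injective (hnormals.symm.trans hux) ▸ hu, hmem.2 (hs1.lt_of_ne fun h => ?_)⟩
    rw [h, inv_one, one_smul] at hx
    exact hyK hx
  · rintro ⟨hω, hyK⟩
    refine ⟨_, ⟨(hmem_frontier (neg_pos.2 hneg)).2 rfl, _, hω, hnormals⟩,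
      -coGauge n ϖ K y, ⟨by linarith, (hmem.1 hyK).le⟩, ?_⟩
    rw [smul_inv_smul₀ (by linarith)]

end CDetermined

lemma HTheta_absolutelyContinuous {n : ℕ} (Θ : En n → ℝ) : HTheta n Θ ≪ volume :=
  withDensity_absolutelyContinuous _ _

namespace CDetermined

variable {n : ℕ} {C ϖ K : Set (En n)} {Θ : En n → ℝ}

lemma ae_notMem_frontier (hK : CDetermined n C ϖ K) : ∀ᵐ y, y ∉ frontier K :=
  measure_eq_zero_iff_ae_notMem.1 (hK.convex.addHaar_frontier volume)

lemma coneVol_eq_HTheta (hC : IsGoodCone n C) (hϖ : IsDirectionSet n C ϖ)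
    (hK : CDetermined n C ϖ K) (ω : Set (En n)) :
    coneVol n Θ K ω = HTheta n Θ (radialGauss n ϖ K ⁻¹' ω ∩ (C \ K)) := by
  refine measure_congr ((HTheta_absolutelyContinuous Θ).ae_eq (eventuallyEq_set.2 ?_))
  filter_upwards [hC.ae_mem_interior, hK.ae_notMem_frontier,
    hK.ae_differentiableAt_coGauge hϖ] with y hyC hyK hd
  by_cases hy : y ∈ C
  · rw [hK.mem_iUnion_segment_iff hC hϖ (hyC hy) hyK hd]
    simp only [mem_inter_iff, mem_preimage, Set.mem_sdiff, hy, true_and]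
  · refine iff_of_false (fun h => hy ?_) fun h => hy h.2.1
    simp only [mem_iUnion, exists_prop] at h
    obtain ⟨x, ⟨hx, -⟩, hyx⟩ := h
    have h0 : (0 : En n) ∈ C := by
      simpa only [zero_smul] using hC.2.2.1 x (hK.subset (hK.isClosed.frontier_subset hx)) 0 le_rfl
    exact hC.2.1.segment_subset h0 (hK.subset (hK.isClosed.frontier_subset hx)) hyx

end CDetermined

namespace RepsConeVol

variable {n : ℕ} {C ϖ K : Set (En n)} {Θ : En n → ℝ} {μ : Measure (En n)}

lemma eq_map (hC : IsGoodCone n C) (hϖ : IsDirectionSet n C ϖ)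
    (hK : CDetermined n C ϖ K) (hμ : RepsConeVol n C Θ K μ) :
    μ = ((HTheta n Θ).restrict (C \ K)).map (radialGauss n ϖ K) := by
  have hdual : MeasurableSet (omegaDual n C) :=
    Metric.isClosed_sphere.measurableSet.inter measurableSet_interior
  have hrange : ∀ᵐ y ∂HTheta n Θ, radialGauss n ϖ K y ∈ omegaDual n C :=
    (HTheta_absolutelyContinuous Θ).ae_le <| (hK.ae_differentiableAt_coGauge hϖ).mono fun _ hd =>
      hϖ.subset_omegaDual (hK.radialGauss_spec hϖ hd).1
  ext ω hω
  rw [← measure_inter_add_sdiff ω hdual, measure_mono_null (sdiff_subset_compl _ _) hμ.1, add_zero,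
    hμ.2 _ (hω.inter hdual) inter_subset_right, hK.coneVol_eq_HTheta hC hϖ,
    Measure.map_apply (measurable_radialGauss ϖ K) hω,
    Measure.restrict_apply (measurable_radialGauss ϖ K hω)]
  refine measure_congr (eventuallyEq_set.2 (hrange.mono fun y hy => ?_))
  simp only [mem_inter_iff, mem_preimage, hy, and_true]

lemma integral_eq (hC : IsGoodCone n C) (hϖ : IsDirectionSet n C ϖ)
    (hK : CDetermined n C ϖ K) (hμ : RepsConeVol n C Θ K μ)
    (f : BoundedContinuousFunction (En n) ℝ) :
    ∫ u, f u ∂μ = ∫ y in C \ K, f (radialGauss n ϖ K y) ∂HTheta n Θ := by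
  rw [hμ.eq_map hC hϖ hK]
  exact integral_map (measurable_radialGauss ϖ K).aemeasurable
    f.continuous.aestronglyMeasurable

end RepsConeVol

lemma IsDirectionSet.exists_sdiff_subset_ball {n : ℕ} {C ϖ : Set (En n)}
    (hϖ : IsDirectionSet n C ϖ) (r : ℝ) :
    ∃ R, ∀ K, CDetermined n C ϖ K → (∃ x ∈ K, ‖x‖ ≤ r) → C \ K ⊆ Metric.ball 0 R := by
  obtain ⟨c, hc, hbound⟩ := exists_inner_le_neg_mul_norm hϖ.isCompact hϖ.subset_interior
  refine ⟨r / c + 1, fun K hK ⟨x, hxK, hxr⟩ y ⟨hyC, hyK⟩ => mem_ball_zero_iff.2 ?_⟩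
  simp only [hK.mem_iff_forall_inner_le, hyC, true_and, not_forall, not_le] at hyK
  obtain ⟨u, hu, hlt⟩ := hyK
  have hxu : ⟪x, u⟫ ≤ suppFn n K u :=
    inner_le_suppFn (hK.bddAbove_image_inner (interior_subset (hϖ.subset_interior hu))) hxK
  have hcs := neg_le_of_abs_le (abs_real_inner_le_norm x u)
  rw [hϖ.norm_eq_one hu, mul_one] at hcs
  have hyr : ‖y‖ ≤ r / c := by
    rw [le_div_iff₀ hc]
    linarith [hbound u hu y hyC]
  linarith

namespace IsThetaWeight

variable {n : ℕ} {C : Set (En n)} {q : ℝ} {Θ : En n → ℝ}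

lemma exists_le_mul_rpow (hC : IsGoodCone n C) (hΘ : IsThetaWeight n C q Θ) :
    ∃ M ≥ 0, ∀ y ∈ C \ {0}, Θ y ≤ M * ‖y‖ ^ (-q) := by
  obtain ⟨M, hM⟩ := ((isCompact_sphere (0 : En n) 1).inter_right hC.1).bddAbove_image
    (hΘ.1.mono fun x hx => ⟨hx.2, Metric.ne_of_mem_sphere hx.1 one_ne_zero⟩)
  refine ⟨|M|, abs_nonneg M, fun y hy => ?_⟩
  have hy_pos : 0 < ‖y‖ := norm_pos_iff.2 hy.2
  have hdir : ‖y‖⁻¹ • y ∈ Metric.sphere (0 : En n) 1 ∩ C :=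
    ⟨mem_sphere_zero_iff_norm.2 (norm_smul_inv_norm hy.2), hC.2.2.1 y hy.1 _ (by positivity)⟩
  have hhom := hΘ.2.2 _ ⟨hdir.2, Metric.ne_of_mem_sphere hdir.1 one_ne_zero⟩ _ hy_pos
  rw [smul_inv_smul₀ hy_pos.ne'] at hhom
  rw [hhom, mul_comm]
  gcongr
  exact (hM (mem_image_of_mem Θ hdir)).trans (le_abs_self M)

lemma HTheta_inter_ball_lt_top (hn : 1 ≤ n) (hC : IsGoodCone n C) (hq : q < n)
    (hΘ : IsThetaWeight n C q Θ) (R : ℝ) : HTheta n Θ (C ∩ Metric.ball 0 R) < ⊤ := by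
  obtain ⟨M, hM0, hM⟩ := hΘ.exists_le_mul_rpow hC
  have : Nonempty (Fin n) := ⟨⟨0, hn⟩⟩
  have hmeas : MeasurableSet (C \ {0}) := hC.1.measurableSet.diff (measurableSet_singleton 0)
  have hint : IntegrableOn ((C \ {0}).indicator Θ) (Metric.ball 0 R) := by
    refine integrableOn_ball_of_norm_le_rpow (C := M) (α := q) (by simpa using hn)
      (by simpa using hq) (.of_forall fun y => ?_)
      ((aestronglyMeasurable_indicator_iff hmeas).2 (hΘ.1.aestronglyMeasurable hmeas))
    by_cases hy : y ∈ C \ {0}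
    · rw [indicator_of_mem hy, Real.norm_of_nonneg (hΘ.2.1 y hy).le]
      exact hM y hy
    · rw [indicator_of_notMem hy, norm_zero]
      positivity
  calc HTheta n Θ (C ∩ Metric.ball 0 R)
      = ∫⁻ y in C ∩ Metric.ball 0 R, ENNReal.ofReal (Θ y) :=
        withDensity_apply _ (hC.1.measurableSet.inter measurableSet_ball)
    _ = ∫⁻ y in C ∩ Metric.ball 0 R, ENNReal.ofReal ((C \ {0}).indicator Θ y) := by
        refine setLIntegral_congr_fun_ae (hC.1.measurableSet.inter measurableSet_ball) ?_
        filter_upwards [compl_mem_ae_iff.2 (measure_singleton 0)] with y hy0 hy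
        rw [indicator_of_mem (show y ∈ C \ {0} from ⟨hy.1, hy0⟩)]
    _ ≤ ∫⁻ y in Metric.ball 0 R, ENNReal.ofReal ((C \ {0}).indicator Θ y) :=
        lintegral_mono_set inter_subset_right
    _ < ⊤ := Integrable.lintegral_lt_top hint

end IsThetaWeight

/-- Convergence `K j → K₀` of `C`-pseudo-cones: Hausdorff convergence of all sufficiently high
truncations `K j ∩ C^-(t)`. -/
def PseudoConeTendsto (n : ℕ) (C : Set (En n)) (v : En n) (K : ℕ → Set (En n)) (K₀ : Set (En n)) :
    Prop :=
  ∃ t₀ > (0 : ℝ), (∀ j, (K j ∩ Cminus n C v t₀).Nonempty) ∧ (K₀ ∩ Cminus n C v t₀).Nonempty ∧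
    ∀ t > t₀, Tendsto
      (fun j => Metric.hausdorffDist (K j ∩ Cminus n C v t) (K₀ ∩ Cminus n C v t)) atTop (𝓝 0)

namespace PseudoConeTendsto

variable {n : ℕ} {C ϖ : Set (En n)} {v : En n} {K : ℕ → Set (En n)} {K₀ : Set (En n)} {x y : En n}

lemma exists_truncation (hconv : PseudoConeTendsto n C v K K₀)
    (hv : -v ∈ interior (dualCone n C)) (a : ℝ) :
    ∃ t > a, (∀ j, (K j ∩ Cminus n C v t).Nonempty) ∧ (K₀ ∩ Cminus n C v t).Nonempty ∧
      (∀ j, Metric.hausdorffEDist (K j ∩ Cminus n C v t) (K₀ ∩ Cminus n C v t) ≠ ⊤) ∧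
      Tendsto (fun j => Metric.hausdorffDist (K j ∩ Cminus n C v t) (K₀ ∩ Cminus n C v t))
        atTop (𝓝 0) := by
  obtain ⟨t₀, -, hne, hne₀, hlim⟩ := hconv
  obtain ⟨t, ht⟩ := exists_gt (max a t₀)
  have hmono : Cminus n C v t₀ ⊆ Cminus n C v t := fun x hx =>
    ⟨hx.1, hx.2.trans ((le_max_right a t₀).trans ht.le)⟩
  have hne_t (j) := (hne j).mono (inter_subset_inter_right _ hmono)
  have hne₀_t := hne₀.mono (inter_subset_inter_right _ hmono)
  have hbdd := isBounded_Cminus hv t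
  exact ⟨t, (le_max_left a t₀).trans_lt ht, hne_t, hne₀_t, fun j =>
    Metric.hausdorffEDist_ne_top_of_nonempty_of_bounded (hne_t j) hne₀_t
      (hbdd.subset inter_subset_right) (hbdd.subset inter_subset_right),
    hlim t ((le_max_right a t₀).trans_lt ht)⟩

lemma exists_mem_norm_le (hconv : PseudoConeTendsto n C v K K₀)
    (hv : -v ∈ interior (dualCone n C)) :
    ∃ r, (∀ j, ∃ x ∈ K j, ‖x‖ ≤ r) ∧ ∃ x ∈ K₀, ‖x‖ ≤ r := by
  obtain ⟨t, -, hne, hne₀, -⟩ := hconv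
  obtain ⟨r, hr⟩ := (isBounded_Cminus hv t).exists_norm_le
  exact ⟨r, fun j => (hne j).imp fun x hx => ⟨hx.1, hr x hx.2⟩,
    hne₀.imp fun x hx => ⟨hx.1, hr x hx.2⟩⟩

lemma eventually_mem_of_mem_interior (hC : IsGoodCone n C) (hv : -v ∈ interior (dualCone n C))
    (hK : ∀ j, CDetermined n C ϖ (K j)) (hK₀ : CDetermined n C ϖ K₀)
    (hconv : PseudoConeTendsto n C v K K₀) (hx : x ∈ interior K₀) : ∀ᶠ j in atTop, x ∈ K j := by
  obtain ⟨t, ht, hne, -, hfin, hlim⟩ := hconv.exists_truncation hv ⟪x, v⟫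
  have hopen : IsOpen {y | ⟪y, v⟫ < t} := isOpen_lt (by fun_prop) continuous_const
  have hsub : interior K₀ ∩ {y | ⟪y, v⟫ < t} ⊆ K₀ ∩ Cminus n C v t := fun y hy =>
    ⟨interior_subset hy.1, hK₀.subset (interior_subset hy.1), (show ⟪y, v⟫ < t from hy.2).le⟩
  have hx_cut : x ∈ interior (K₀ ∩ Cminus n C v t) :=
    interior_maximal hsub (isOpen_interior.inter hopen) ⟨hx, ht⟩
  exact (eventually_mem_of_tendsto_hausdorffDist
    (fun j => (hK j).isClosed.inter (isClosed_Cminus hC.1 v t))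
    (fun j => (hK j).convex.inter (convex_Cminus hC.2.1 v t)) hne hfin hlim hx_cut).mono
    fun j hj => hj.1

lemma eventually_notMem (hC : IsGoodCone n C) (hv : -v ∈ interior (dualCone n C))
    (hK₀ : IsClosed K₀) (hconv : PseudoConeTendsto n C v K K₀) (hx : x ∈ C \ K₀) :
    ∀ᶠ j in atTop, x ∉ K j := by
  obtain ⟨t, ht, -, hne₀, hfin, hlim⟩ := hconv.exists_truncation hv ⟪x, v⟫
  exact (eventually_notMem_of_tendsto_hausdorffDist (hK₀.inter (isClosed_Cminus hC.1 v t)) hne₀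
    hfin hlim fun h => hx.2 h.1).mono fun j hj h => hj ⟨h, hx.1, ht.le⟩

lemma eventually_mem_sdiff_iff (hC : IsGoodCone n C) (hv : -v ∈ interior (dualCone n C))
    (hK : ∀ j, CDetermined n C ϖ (K j)) (hK₀ : CDetermined n C ϖ K₀)
    (hconv : PseudoConeTendsto n C v K K₀) (hx : x ∉ frontier K₀) :
    ∀ᶠ j in atTop, x ∈ C \ K j ↔ x ∈ C \ K₀ := by
  by_cases hxK : x ∈ K₀
  · have hx_int : x ∈ interior K₀ := by
      by_contra h
      exact hx (hK₀.isClosed.frontier_eq ▸ ⟨hxK, h⟩)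
    filter_upwards [hconv.eventually_mem_of_mem_interior hC hv hK hK₀ hx_int] with j hj
    simp only [Set.mem_sdiff, hj, hxK]
  · by_cases hxC : x ∈ C
    · filter_upwards [hconv.eventually_notMem hC hv hK₀.isClosed ⟨hxC, hxK⟩] with j hj
      simp only [Set.mem_sdiff, hj, hxK]
    · simp only [Set.mem_sdiff, hxC, false_and, eventually_true]

lemma tendsto_coGauge (hC : IsGoodCone n C) (hv : -v ∈ interior (dualCone n C))
    (hϖ : IsDirectionSet n C ϖ) (hK : ∀ j, CDetermined n C ϖ (K j)) (hK₀ : CDetermined n C ϖ K₀)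
    (hconv : PseudoConeTendsto n C v K K₀) (hy : y ∈ interior C) :
    Tendsto (fun j => coGauge n ϖ (K j) y) atTop (𝓝 (coGauge n ϖ K₀ y)) := by
  have hpos := neg_pos.2 (hK₀.coGauge_neg hϖ hy)
  refine tendsto_neg_iff.1 (tendsto_order.2 ⟨fun a ha => ?_, fun b hb => ?_⟩)
  · obtain ⟨s, has, hs⟩ := exists_between (max_lt ha hpos)
    have hs_pos := (le_max_right a 0).trans_lt has
    filter_upwards [hconv.eventually_mem_of_mem_interior hC hv hK hK₀
      ((hK₀.inv_smul_mem_interior_iff hC hϖ hy hs_pos).2 hs)] with j hj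
    exact ((le_max_left a 0).trans_lt has).trans_le
      (((hK j).inv_smul_mem_iff hC hϖ hy hs_pos).1 hj)
  · have hb_pos := hpos.trans hb
    have hbC := interior_subset (hC.smul_mem_interior (inv_pos.2 hb_pos) hy)
    filter_upwards [hconv.eventually_notMem hC hv hK₀.isClosed
      ⟨hbC, (hK₀.inv_smul_mem_iff hC hϖ hy hb_pos).not.2 hb.not_ge⟩] with j hj
    exact not_le.1 (((hK j).inv_smul_mem_iff hC hϖ hy hb_pos).not.1 hj)

lemma tendsto_radialGauss (hC : IsGoodCone n C) (hv : -v ∈ interior (dualCone n C))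
    (hϖ : IsDirectionSet n C ϖ) (hK : ∀ j, CDetermined n C ϖ (K j)) (hK₀ : CDetermined n C ϖ K₀)
    (hconv : PseudoConeTendsto n C v K K₀) (hy : y ∈ interior C)
    (hd : ∀ j, DifferentiableAt ℝ (coGauge n ϖ (K j)) y)
    (hd₀ : DifferentiableAt ℝ (coGauge n ϖ K₀) y) :
    Tendsto (fun j => radialGauss n ϖ (K j) y) atTop (𝓝 (radialGauss n ϖ K₀ y)) := by
  have hcompact (j) := (hK j).isCompact_copolarPts hϖ
  have hspec (j) := gradient_suppFn_mem (hcompact j) (hϖ.copolarPts_nonempty (K j)) (hd j)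
  have hlim : Tendsto (fun j => ∇ (coGauge n ϖ (K j)) y) atTop (𝓝 (∇ (coGauge n ϖ K₀) y)) :=
    tendsto_subgradient (isOpen_interior.mem_nhds hy)
      (fun j z _ => suppFn_add_inner_le (hcompact j).isBounded (hspec j).1 (hspec j).2 z)
      (fun z hz => hconv.tendsto_coGauge hC hv hϖ hK hK₀ hz) (hasFDerivAt_innerSL_gradient hd₀)
  have hne : ∇ (coGauge n ϖ K₀) y ≠ 0 := fun h => by
    have heq := (gradient_suppFn_mem (hK₀.isCompact_copolarPts hϖ)
      (hϖ.copolarPts_nonempty K₀) hd₀).2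
    have hneg := hK₀.coGauge_neg hϖ hy
    rw [coGauge] at h hneg
    rw [← heq, h, inner_zero_left] at hneg
    exact hneg.false
  exact (hlim.norm.inv₀ (norm_ne_zero_iff.2 hne)).smul hlim

end PseudoConeTendsto

theorem statement5_general {n : ℕ} {C ϖ : Set (En n)} {v : En n} {Θ : En n → ℝ}
    (hC : IsGoodCone n C) (hv : -v ∈ interior (dualCone n C))
    (hΘ : ∀ R, HTheta n Θ (C ∩ Metric.ball 0 R) < ⊤) (hϖ : IsDirectionSet n C ϖ)
    {K : ℕ → Set (En n)} {K₀ : Set (En n)} (hK : ∀ j, CDetermined n C ϖ (K j))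
    (hK₀ : CDetermined n C ϖ K₀) (hconv : PseudoConeTendsto n C v K K₀)
    {μ : ℕ → Measure (En n)} {μ₀ : Measure (En n)} (hμ : ∀ j, RepsConeVol n C Θ (K j) (μ j))
    (hμ₀ : RepsConeVol n C Θ K₀ μ₀) (f : BoundedContinuousFunction (En n) ℝ) :
    Tendsto (fun j => ∫ x, f x ∂μ j) atTop (𝓝 (∫ x, f x ∂μ₀)) := by
  simp only [(hμ _).integral_eq hC hϖ (hK _) f, hμ₀.integral_eq hC hϖ hK₀ f]
  obtain ⟨r, hr, hr₀⟩ := hconv.exists_mem_norm_le hv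
  obtain ⟨R, hR⟩ := hϖ.exists_sdiff_subset_ball r
  have hmem : ∀ᵐ y ∂HTheta n Θ, ∀ᶠ j in atTop, y ∈ C \ K j ↔ y ∈ C \ K₀ :=
    (HTheta_absolutelyContinuous Θ).ae_le <| hK₀.ae_notMem_frontier.mono fun y hy =>
      hconv.eventually_mem_sdiff_iff hC hv hK hK₀ hy
  have hlim : ∀ᵐ y ∂HTheta n Θ, y ∈ C \ K₀ →
      Tendsto (fun j => f (radialGauss n ϖ (K j) y)) atTop (𝓝 (f (radialGauss n ϖ K₀ y))) := by
    refine (HTheta_absolutelyContinuous Θ).ae_le ?_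
    filter_upwards [hC.ae_mem_interior, ae_all_iff.2 fun j => (hK j).ae_differentiableAt_coGauge hϖ,
      hK₀.ae_differentiableAt_coGauge hϖ] with y hyC hd hd₀ hy
    exact (f.continuous.tendsto _).comp
      (hconv.tendsto_radialGauss hC hv hϖ hK hK₀ (hyC hy.1) hd hd₀)
  exact tendsto_setIntegral_of_eventually_mem_iff
    (fun j => hC.1.measurableSet.diff (hK j).isClosed.measurableSet)
    (hC.1.measurableSet.diff hK₀.isClosed.measurableSet) (hΘ R).ne
    (fun j => subset_inter sdiff_subset (hR _ (hK j) (hr j)))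
    (subset_inter sdiff_subset (hR _ hK₀ hr₀))
    (fun j => (f.continuous.measurable.comp
      (measurable_radialGauss ϖ (K j))).aestronglyMeasurable)
    (fun j y => f.norm_coe_le_norm _) hmem hlim

/-- If `K_j ∈ K(C,ϖ)` and `K_j → K₀` (in the sense of convergence of
`C`-pseudo-cones), then `V_{K_j}^Θ → V_{K₀}^Θ` weakly. -/
theorem statement5 (n : ℕ) (hn : 2 ≤ n) (C : Set (En n)) (hC : IsGoodCone n C)
    (v : En n) (hv1 : ‖v‖ = 1) (hv2 : v ∈ interior C) (hv3 : -v ∈ interior (dualCone n C))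
    (q : ℝ) (hq1 : (n : ℝ) - 1 < q) (hq2 : q < n)
    (Θ : En n → ℝ) (hΘ : IsThetaWeight n C q Θ)
    (ϖ : Set (En n)) (hϖne : ϖ.Nonempty) (hϖc : IsCompact ϖ) (hϖsub : ϖ ⊆ omegaDual n C)
    (K : ℕ → Set (En n)) (K₀ : Set (En n))
    (hKj : ∀ j, CDetermined n C ϖ (K j)) (hK₀ : CDetermined n C ϖ K₀)
    (hconv : ∃ t₀ > (0 : ℝ), (∀ j, (K j ∩ Cminus n C v t₀).Nonempty) ∧
      (K₀ ∩ Cminus n C v t₀).Nonempty ∧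
      ∀ t > t₀, Tendsto
        (fun j => Metric.hausdorffDist (K j ∩ Cminus n C v t) (K₀ ∩ Cminus n C v t))
        atTop (nhds 0))
    (μ : ℕ → Measure (En n)) (μ₀ : Measure (En n))
    (hμ : ∀ j, RepsConeVol n C Θ (K j) (μ j)) (hμ₀ : RepsConeVol n C Θ K₀ μ₀) :
    ∀ f : BoundedContinuousFunction (En n) ℝ,
      Tendsto (fun j => ∫ x, f x ∂(μ j)) atTop (nhds (∫ x, f x ∂μ₀)) := by
  exact statement5_general hC hv3 (hΘ.HTheta_inter_ball_lt_top (by omega) hC hq2)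
    ⟨hϖne, hϖc, hϖsub⟩ hKj hK₀ hconv hμ hμ₀
end
end

section
/- Let K ∈ ps(C) and let ω ⊂ Ω_{C°} be a Borel set with Δ(ω) > 0. Then ν_K^{-1}(ω) ⊂ (b(K)/sin Δ(ω)) Bⁿ, where Bⁿ is the closed unit ball and b(K) is the distance of K from the origin. -/
open MeasureTheory Set Filter
open scoped RealInnerProductSpace ENNReal Topology Pointwise NNReal

noncomputable section

/-!
If `u` is an outer unit normal of `K` at `x ∈ K`, then `K` lies in the half-space
`⟪·, u⟫ ≤ ⟪x, u⟫`, so `-⟪x, u⟫ ≤ b(K)`. Since `x ∈ K ⊆ C`, the interior of the dual cone `C°` lies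
in the open half-space `⟪·, x⟫ < 0`, so the distance from `u ∈ int C°` to the complement of
`int C°` is at most `-⟪x, u⟫ / ‖x‖`. That distance `d` is attained at a frontier point `q` of
`int C°`. If `d < 1`, then the angle between `u` and `q` is acute and at least `Δ(ω)`, and the law
of sines bounds its sine by `d`; so `sin Δ(ω) ≤ d` in all cases.
-/

section InnerProductSpace

open InnerProductGeometry

variable {E : Type*} [NormedAddCommGroup E] [InnerProductSpace ℝ E]

lemma inner_pos_of_norm_sub_lt_norm {x y : E} (h : ‖x - y‖ < ‖x‖) : 0 < ⟪x, y⟫ := by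
  have hsq : ‖x - y‖ ^ 2 < ‖x‖ ^ 2 := by gcongr
  rw [norm_sub_sq_real] at hsq
  linarith [sq_nonneg ‖y‖]

lemma sin_angle_mul_norm_le_norm_sub (x y : E) : Real.sin (angle x y) * ‖x‖ ≤ ‖x - y‖ := by
  rw [sin_angle_mul_norm_eq_sin_angle_mul_norm]
  exact mul_le_of_le_one_left (norm_nonneg _) (Real.sin_le_one _)

lemma angle_le_pi_div_two_of_inner_nonneg {x y : E} (h : 0 ≤ ⟪x, y⟫) :
    angle x y ≤ Real.pi / 2 :=
  Real.arccos_le_pi_div_two.2 (by positivity)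

end InnerProductSpace

section DualCone

variable {n : ℕ} {C : Set (En n)} {u v w : En n}

lemma isClosed_dualCone : IsClosed (dualCone n C) := by
  have hdual : dualCone n C = ⋂ y ∈ C, {x | ⟪x, y⟫ ≤ 0} := by ext; simp [dualCone]
  rw [hdual]
  exact isClosed_biInter fun y _ ↦ isClosed_le (by fun_prop) continuous_const

lemma inner_neg_of_mem_interior_dualCone (hu : u ∈ interior (dualCone n C)) (hw : w ∈ C)
    (hw0 : w ≠ 0) : ⟪w, u⟫ < 0 := by
  have hopen : IsOpenMap (innerSL ℝ w) :=
    ContinuousLinearMap.isOpenMap_of_ne_zero _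
      (norm_ne_zero_iff.1 (by rwa [innerSL_apply_norm, norm_ne_zero_iff]))
  have hmaps : MapsTo (innerSL ℝ w) (dualCone n C) (Iic 0) := fun x hx ↦ by
    simpa [real_inner_comm] using hx w hw
  have hinterior := hopen.mapsTo_interior hmaps hu
  rwa [interior_Iic] at hinterior

lemma smul_mem_interior_dualCone {r : ℝ} (hr : 0 < r) (hu : u ∈ interior (dualCone n C)) :
    r • u ∈ interior (dualCone n C) := by
  have hmaps : MapsTo (r • ·) (dualCone n C) (dualCone n C) := fun x hx y hy ↦ by
    rw [real_inner_smul_left]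
    exact mul_nonpos_of_nonneg_of_nonpos hr.le (hx y hy)
  exact (isOpenMap_smul₀ hr.ne').mapsTo_interior hmaps hu

lemma normalize_mem_omegaDual_iff (hv : v ≠ 0) :
    NormedSpace.normalize v ∈ omegaDual n C ↔ v ∈ interior (dualCone n C) := by
  have hpos : 0 < ‖v‖ := norm_pos_iff.2 hv
  refine ⟨fun h ↦ ?_, fun h ↦ ⟨?_, smul_mem_interior_dualCone (inv_pos.2 hpos) h⟩⟩
  · simpa only [NormedSpace.norm_smul_normalize] using smul_mem_interior_dualCone hpos h.2
  · exact mem_sphere_zero_iff_norm.2 (NormedSpace.norm_normalize hv)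

lemma normalize_mem_closure_omegaDual (hv : v ≠ 0)
    (hcl : v ∈ closure (interior (dualCone n C))) :
    NormedSpace.normalize v ∈ closure (omegaDual n C) := by
  have hcont : ContinuousAt NormedSpace.normalize v :=
    (continuousAt_id.norm.inv₀ (norm_ne_zero_iff.2 hv)).smul continuousAt_id
  have hcl' : v ∈ closure ({0}ᶜ ∩ interior (dualCone n C)) :=
    isOpen_compl_singleton.inter_closure ⟨hv, hcl⟩
  exact hcont.continuousWithinAt.mem_closure hcl' fun x hx ↦
    (normalize_mem_omegaDual_iff hx.1).2 hx.2

lemma closure_omegaDual_subset_dualCone : closure (omegaDual n C) ⊆ dualCone n C :=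
  closure_minimal (inter_subset_right.trans interior_subset) isClosed_dualCone

end DualCone

section SphereAngleDist

open InnerProductGeometry

variable {n : ℕ} {C ω : Set (En n)} {u p q v w : En n}

lemma sphereAngleDist_nonneg : 0 ≤ sphereAngleDist n C ω := by
  refine Real.sInf_nonneg ?_
  rintro d ⟨u, -, v, -, rfl⟩
  exact angle_nonneg u v

lemma sphereAngleDist_le_angle (hu : u ∈ ω) (hv : v ∈ closure (omegaDual n C) \ omegaDual n C) :
    sphereAngleDist n C ω ≤ angle u v := by
  refine csInf_le ⟨0, ?_⟩ ⟨u, hu, v, hv, rfl⟩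
  rintro d ⟨u', -, v', -, rfl⟩
  exact angle_nonneg u' v'

lemma sphereAngleDist_le_angle_of_mem_frontier (hu : u ∈ ω) (hq0 : q ≠ 0)
    (hq : q ∈ frontier (interior (dualCone n C))) : sphereAngleDist n C ω ≤ angle u q := by
  rw [isOpen_interior.frontier_eq] at hq
  rw [← angle_normalize_right]
  exact sphereAngleDist_le_angle hu ⟨normalize_mem_closure_omegaDual hq0 hq.1,
    fun h ↦ hq.2 ((normalize_mem_omegaDual_iff hq0).1 h)⟩

lemma sphereAngleDist_lt_pi (hω : ω ⊆ omegaDual n C) (hw : w ∈ C) (hw0 : w ≠ 0) :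
    sphereAngleDist n C ω < Real.pi := by
  rcases eq_empty_or_nonempty {d | ∃ u ∈ ω, ∃ v ∈ closure (omegaDual n C) \ omegaDual n C,
    d = angle u v} with hempty | ⟨-, u, hu, v, hv, -⟩
  · rw [sphereAngleDist, hempty, Real.sInf_empty]
    exact Real.pi_pos
  · refine (sphereAngleDist_le_angle hu hv).trans_lt ((angle_le_pi u v).lt_of_ne fun hpi ↦ ?_)
    obtain ⟨-, r, hr, rfl⟩ := angle_eq_pi_iff.1 hpi
    have huw : ⟪w, u⟫ < 0 := inner_neg_of_mem_interior_dualCone (hω hu).2 hw hw0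
    have hvw : ⟪r • u, w⟫ ≤ 0 := closure_omegaDual_subset_dualCone hv.1 w hw
    rw [real_inner_smul_left, real_inner_comm] at hvw
    exact (mul_pos_of_neg_of_neg hr huw).not_ge hvw

lemma sin_sphereAngleDist_le_norm_sub (huω : u ∈ ω) (hu : u ∈ omegaDual n C)
    (hp : p ∉ interior (dualCone n C)) : Real.sin (sphereAngleDist n C ω) ≤ ‖u - p‖ := by
  have hu1 : ‖u‖ = 1 := mem_sphere_zero_iff_norm.1 hu.1
  obtain ⟨q, hq, hdist⟩ := exists_mem_frontier_infDist_compl_eq_dist hu.2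
    ((ne_univ_iff_exists_notMem _).2 ⟨p, hp⟩)
  have hqp : ‖u - q‖ ≤ ‖u - p‖ := by
    simpa only [hdist, dist_eq_norm] using Metric.infDist_le_dist_of_mem (x := u) (mem_compl hp)
  rcases le_or_gt 1 ‖u - q‖ with hfar | hnear
  · exact (Real.sin_le_one _).trans (hfar.trans hqp)
  have hinner : 0 < ⟪u, q⟫ := inner_pos_of_norm_sub_lt_norm (hnear.trans_eq hu1.symm)
  have hq0 : q ≠ 0 := by rintro rfl; simp at hinner
  calc Real.sin (sphereAngleDist n C ω)
      ≤ Real.sin (angle u q) :=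
        Real.sin_le_sin_of_le_of_le_pi_div_two
          (by linarith [Real.pi_pos, sphereAngleDist_nonneg (C := C) (ω := ω)])
          (angle_le_pi_div_two_of_inner_nonneg hinner.le)
          (sphereAngleDist_le_angle_of_mem_frontier huω hq0 hq)
    _ ≤ ‖u - q‖ := by simpa only [hu1, mul_one] using sin_angle_mul_norm_le_norm_sub u q
    _ ≤ ‖u - p‖ := hqp

lemma norm_mul_sin_sphereAngleDist_le_neg_inner (huω : u ∈ ω) (hu : u ∈ omegaDual n C)
    (hw : w ∈ C) : ‖w‖ * Real.sin (sphereAngleDist n C ω) ≤ -⟪w, u⟫ := by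
  rcases eq_or_ne w 0 with rfl | hw0
  · simp
  have hnorm : 0 < ‖w‖ := norm_pos_iff.2 hw0
  have hneg : ⟪w, u⟫ < 0 := inner_neg_of_mem_interior_dualCone hu.2 hw hw0
  -- The orthogonal projection of `u` onto the hyperplane `w^⊥`.
  set p := u - (⟪w, u⟫ / ‖w‖ ^ 2) • w with hp
  have hpw : ⟪w, p⟫ = 0 := by
    rw [hp, inner_sub_right, real_inner_smul_right, real_inner_self_eq_norm_sq]
    field_simp
    ring
  have hpnot : p ∉ interior (dualCone n C) := fun h ↦
    (inner_neg_of_mem_interior_dualCone h hw hw0).ne hpw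
  have hup : ‖u - p‖ = -⟪w, u⟫ / ‖w‖ := by
    rw [hp, sub_sub_cancel, norm_smul, norm_div, Real.norm_of_nonpos hneg.le, norm_pow, norm_norm]
    field_simp
  rw [mul_comm, ← le_div_iff₀ hnorm, ← hup]
  exact sin_sphereAngleDist_le_norm_sub huω hu hpnot

end SphereAngleDist

section PseudoCone

variable {n : ℕ} {C K ω : Set (En n)} {u x : En n}

lemma IsPseudoCone.subset_recCone (hK : IsPseudoCone n K) : K ⊆ recCone n K := by
  obtain ⟨-, hclosed, hconvex, -, hdilate⟩ := hK
  intro x hx y hy t ht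
  rcases ht.eq_or_lt with rfl | htpos
  · simpa using hy
  -- `y + t • x` is the limit as `s → 0⁺` of convex combinations of `y` and `(t / s) • x`.
  have hlim : Tendsto (fun s : ℝ ↦ (1 - s) • y + t • x) (𝓝[>] 0) (𝓝 (y + t • x)) := by
    have hcont : Continuous fun s : ℝ ↦ (1 - s) • y + t • x := by fun_prop
    simpa using (hcont.tendsto 0).mono_left nhdsWithin_le_nhds
  refine hclosed.mem_of_tendsto hlim ?_
  filter_upwards [Ioo_mem_nhdsGT (lt_min one_pos htpos)] with s ⟨hs0, hs⟩
  obtain ⟨hs1, hst⟩ := lt_min_iff.1 hs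
  have hmem : (t / s) • x ∈ K :=
    hdilate _ ((one_le_div hs0).2 hst.le) (smul_mem_smul_set hx)
  simpa only [smul_smul, mul_div_cancel₀ t hs0.ne'] using
    hconvex hy hmem (sub_nonneg.2 hs1.le) hs0.le (sub_add_cancel 1 s)

lemma neg_inner_le_distOrigin (hK : K.Nonempty) (hu : u ∈ normalsAt n K x) :
    -⟪x, u⟫ ≤ distOrigin n K := by
  refine (Metric.le_infDist hK).2 fun z hz ↦ ?_
  calc -⟪x, u⟫ ≤ -⟪z, u⟫ := neg_le_neg (hu.2 z hz)
    _ ≤ ‖z‖ * ‖u‖ := (neg_le_abs _).trans (abs_real_inner_le_norm z u)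
    _ = dist 0 z := by rw [hu.1, mul_one, dist_zero_left]

theorem statement8_general (hK : IsCPseudoCone n C K) (hω : ω ⊆ omegaDual n C)
    (hΔ : 0 < sphereAngleDist n C ω) :
    {x ∈ K | (normalsAt n K x ∩ ω).Nonempty} ⊆
      Metric.closedBall 0 (distOrigin n K / Real.sin (sphereAngleDist n C ω)) := by
  rintro x ⟨hxK, u, hu, huω⟩
  have hx0 : x ≠ 0 := ne_of_mem_of_not_mem hxK hK.1.2.2.2.1
  have hxC : x ∈ C := hK.2 ▸ hK.1.subset_recCone hxK
  have hsin : 0 < Real.sin (sphereAngleDist n C ω) :=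
    Real.sin_pos_of_pos_of_lt_pi hΔ (sphereAngleDist_lt_pi hω hxC hx0)
  rw [mem_closedBall_zero_iff, le_div_iff₀ hsin]
  exact (norm_mul_sin_sphereAngleDist_le_neg_inner huω (hω huω) hxC).trans
    (neg_inner_le_distOrigin hK.1.1 hu)

end PseudoCone

/-- For `K ∈ ps(C)` and a Borel set `ω ⊆ Ω_{C°}` with `Δ(ω) > 0` one has
`ν_K^{-1}(ω) ⊆ (b(K)/sin Δ(ω)) Bⁿ`. -/
theorem statement8 (n : ℕ) (hn : 2 ≤ n) (C : Set (En n)) (hC : IsGoodCone n C)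
    (K : Set (En n)) (hK : IsCPseudoCone n C K)
    (ω : Set (En n)) (hω : MeasurableSet ω) (hωsub : ω ⊆ omegaDual n C)
    (hΔ : 0 < sphereAngleDist n C ω) :
    nuInv n K ω ⊆ Metric.closedBall 0 (distOrigin n K / Real.sin (sphereAngleDist n C ω)) := by
  rintro x ⟨hx, u, huω, hu⟩
  exact statement8_general hK hωsub hΔ
    ⟨hK.1.2.1.frontier_subset hx, u, hu.symm.subset rfl, huω⟩
end
end
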